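/- arXiv:1112.3690 — 4 statements merged into one kernel-verified Lean document; each statement's English description precedes it below -/
import Mathlib

section
/- Let α ∈ (0,1), ρ ∈ (0,1), ρ̂ = 1−ρ, and x > 1. Then (sin(παρ̂)/π)·(x+1)^{αρ}·(x−1)^{αρ̂}·∫_{−1}^{1} (1+u)^{−αρ} (1−u)^{−αρ̂} (x−u)^{−1} du = (Γ(1−αρ)/(Γ(αρ̂)Γ(1−α)))·∫_0^{2/(x+1)} s^{−α} (1−s)^{αρ̂−1} ds. -/
open MeasureTheory

/-- The Beta integrand is integrable on `(0, 1)`. -/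
theorem intervalIntegrable_beta {p q : ℝ} (hp : 0 < p) (hq : 0 < q) :
    IntervalIntegrable (fun y : ℝ => y ^ (p - 1) * (1 - y) ^ (q - 1)) volume 0 1 := by
  have h := Complex.betaIntegral_convergent (u := p) (v := q) (by simpa) (by simpa)
  rw [intervalIntegrable_iff_integrableOn_Ioc_of_le zero_le_one] at h ⊢
  have h_re : IntegrableOn (fun y : ℝ =>
      RCLike.re ((y : ℂ) ^ ((p : ℂ) - 1) * (1 - (y : ℂ)) ^ ((q : ℂ) - 1))) (Set.Ioc 0 1) :=
    Integrable.re h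
  refine h_re.congr_fun (fun y hy => ?_) measurableSet_Ioc
  norm_cast
  beta_reduce
  rw [← Complex.ofReal_cpow hy.1.le, ← Complex.ofReal_cpow (by linarith [hy.2]),
    RCLike.re_to_complex, Complex.re_mul_ofReal, Complex.ofReal_re]

/-- Euler's evaluation of the real Beta integral. -/
theorem integral_beta {p q : ℝ} (hp : 0 < p) (hq : 0 < q) :
    ∫ y in (0:ℝ)..1, y ^ (p - 1) * (1 - y) ^ (q - 1) = ProbabilityTheory.beta p q := by
  have h := Complex.betaIntegral_convergent (u := p) (v := q) (by simpa) (by simpa)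
  rw [intervalIntegrable_iff_integrableOn_Ioc_of_le zero_le_one] at h
  rw [ProbabilityTheory.beta_eq_betaIntegralReal p q hp hq, Complex.betaIntegral,
    intervalIntegral.integral_of_le zero_le_one, intervalIntegral.integral_of_le zero_le_one,
    ← RCLike.re_to_complex, ← integral_re h]
  refine setIntegral_congr_fun measurableSet_Ioc fun y hy => ?_
  norm_cast
  rw [← Complex.ofReal_cpow hy.1.le, ← Complex.ofReal_cpow (by linarith [hy.2]),
    RCLike.re_to_complex, Complex.re_mul_ofReal, Complex.ofReal_re]

theorem one_sub_mul_pos {s y : ℝ} (hs0 : 0 ≤ s) (hs1 : s < 1) (hy : y ≤ 1) : 0 < 1 - s * y := by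
  nlinarith [mul_le_mul_of_nonneg_left hy hs0]

theorem hasDerivAt_mul_div_one_sub_mul (c s : ℝ) {y : ℝ} (h : 1 - s * y ≠ 0) :
    HasDerivAt (fun y => c * y / (1 - s * y)) (c / (1 - s * y) ^ 2) y := by
  have h_num : HasDerivAt (fun y : ℝ => c * y) c y := by
    simpa using (hasDerivAt_id y).const_mul c
  have h_den : HasDerivAt (fun y : ℝ => 1 - s * y) (-s) y := by
    simpa using ((hasDerivAt_id y).const_mul s).const_sub 1
  convert! h_num.div h_den h using 1
  ring

/-- A Beta integral with a Möbius weight whose exponent is the sum of the parameters. -/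
theorem integral_beta_mul_one_sub_mul {p q s : ℝ} (hp : 0 < p) (hq : 0 < q)
    (hs0 : 0 ≤ s) (hs1 : s < 1) :
    ∫ y in (0:ℝ)..1, y ^ (p - 1) * (1 - y) ^ (q - 1) * (1 - s * y) ^ (-(p + q)) =
      (1 - s) ^ (-p) * ProbabilityTheory.beta p q := by
  have hs : 0 < 1 - s := by linarith
  have h_pos : ∀ y ∈ Set.Icc (0:ℝ) 1, 0 < 1 - s * y := fun y hy =>
    one_sub_mul_pos hs0 hs1 hy.2
  have h_deriv : ∀ y ∈ Set.Icc (0:ℝ) 1, HasDerivAt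
      (fun y => (1 - s) * y / (1 - s * y)) ((1 - s) / (1 - s * y) ^ 2) y := fun y hy =>
    hasDerivAt_mul_div_one_sub_mul _ _ (h_pos y hy).ne'
  have h_sub := intervalIntegral.integral_comp_mul_deriv_of_deriv_nonneg (a := 0) (b := 1)
    (f := fun y => (1 - s) * y / (1 - s * y)) (f' := fun y => (1 - s) / (1 - s * y) ^ 2)
    (g := fun y => y ^ (p - 1) * (1 - y) ^ (q - 1))
    (by
      rw [Set.uIcc_of_le zero_le_one]
      exact fun y hy => (h_deriv y hy).continuousAt.continuousWithinAt)
    (by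
      rw [min_eq_left zero_le_one, max_eq_right zero_le_one]
      exact fun y hy => h_deriv y (Set.Ioo_subset_Icc_self hy))
    (fun y _ => by positivity)
  simp only [mul_zero, zero_div, mul_one, div_self hs.ne'] at h_sub
  rw [integral_beta hp hq] at h_sub
  rw [← h_sub, ← intervalIntegral.integral_const_mul]
  refine intervalIntegral.integral_congr_Ioo_of_le zero_le_one fun y hy => ?_
  have hd := h_pos y (Set.Ioo_subset_Icc_self hy)
  have hy0 : 0 < y := hy.1
  have hy1 : 0 < 1 - y := by linarith [hy.2]
  have h_one_sub : 1 - (1 - s) * y / (1 - s * y) = (1 - y) / (1 - s * y) := by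
    field_simp
    ring
  have h_weight : (1 - s) / (1 - s * y) ^ 2 = (1 - s) ^ (1:ℝ) * (1 - s * y) ^ (-2:ℝ) := by
    rw [Real.rpow_neg hd.le, Real.rpow_one, Real.rpow_two, div_eq_mul_inv]
  simp only [Function.comp_apply]
  rw [h_one_sub, h_weight, Real.div_rpow (by positivity) hd.le, Real.div_rpow hy1.le hd.le,
    Real.mul_rpow hs.le hy0.le, div_eq_mul_inv, div_eq_mul_inv, ← Real.rpow_neg hd.le,
    ← Real.rpow_neg hd.le]
  simp only [Real.rpow_def_of_pos hs, Real.rpow_def_of_pos hd, Real.rpow_def_of_pos hy0,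
    Real.rpow_def_of_pos hy1, ← Real.exp_add]
  congr 1
  ring

theorem integral_rpow_mul_one_sub_mul_rpow {A t y : ℝ} (hA : 0 < A) (ht0 : 0 < t) (ht1 : t < 1)
    (hy1 : y ≤ 1) :
    ∫ s in (0:ℝ)..t, s ^ (A - 1) * (1 - s * y) ^ (-(A + 1)) =
      t ^ A / A * (1 - t * y) ^ (-A) := by
  have h_pos : ∀ s ∈ Set.Icc (0:ℝ) t, 0 < 1 - y * s := fun s hs => by
    rw [mul_comm]
    exact one_sub_mul_pos hs.1 (hs.2.trans_lt ht1) hy1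
  have h_deriv : ∀ s ∈ Set.Icc (0:ℝ) t, HasDerivAt
      (fun s => 1 * s / (1 - y * s)) (1 / (1 - y * s) ^ 2) s := fun s hs =>
    hasDerivAt_mul_div_one_sub_mul _ _ (h_pos s hs).ne'
  have h_sub := intervalIntegral.integral_comp_mul_deriv_of_deriv_nonneg (a := 0) (b := t)
    (f := fun s => 1 * s / (1 - y * s)) (f' := fun s => 1 / (1 - y * s) ^ 2)
    (g := fun s => s ^ (A - 1))
    (by
      rw [Set.uIcc_of_le ht0.le]
      exact fun s hs => (h_deriv s hs).continuousAt.continuousWithinAt)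
    (by
      rw [min_eq_left ht0.le, max_eq_right ht0.le]
      exact fun s hs => h_deriv s (Set.Ioo_subset_Icc_self hs))
    (fun s _ => by positivity)
  have ht := h_pos t ⟨ht0.le, le_rfl⟩
  simp only [mul_zero, zero_div, one_mul] at h_sub
  rw [integral_rpow (Or.inl (by linarith)), sub_add_cancel, Real.zero_rpow hA.ne', sub_zero,
    Real.div_rpow ht0.le ht.le] at h_sub
  rw [mul_comm t y, Real.rpow_neg ht.le]
  trans t ^ A / (1 - y * t) ^ A / A
  · rw [← h_sub]
    refine intervalIntegral.integral_congr_Ioo_of_le ht0.le fun s hs => ?_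
    have hd := h_pos s (Set.Ioo_subset_Icc_self hs)
    have hs0 : 0 < s := hs.1
    have h_weight : 1 / (1 - y * s) ^ 2 = (1 - y * s) ^ (-2:ℝ) := by
      rw [Real.rpow_neg hd.le, Real.rpow_two, one_div]
    simp only [Function.comp_apply]
    rw [h_weight, mul_comm s y, Real.div_rpow hs0.le hd.le, div_eq_mul_inv, ← Real.rpow_neg hd.le]
    simp only [Real.rpow_def_of_pos hd, Real.rpow_def_of_pos hs0, ← Real.exp_add]
    congr 1
    ring
  · ring

theorem integrable_euler_kernel {p q A t : ℝ} (hp : 0 < p) (hq : 0 < q) (hA : 0 < A)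
    (ht0 : 0 < t) (ht1 : t < 1) :
    Integrable (Function.uncurry fun y s : ℝ =>
      y ^ (p - 1) * (1 - y) ^ (q - 1) * (s ^ (A - 1) * (1 - s * y) ^ (-(A + 1))))
      ((volume.restrict (Set.Ioc 0 1)).prod (volume.restrict (Set.Ioc 0 t))) := by
  have h_beta := intervalIntegrable_beta hp hq
  have h_rpow : IntervalIntegrable (fun s : ℝ => s ^ (A - 1)) volume 0 t :=
    intervalIntegral.intervalIntegrable_rpow' (by linarith)
  rw [intervalIntegrable_iff_integrableOn_Ioc_of_le zero_le_one] at h_beta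
  rw [intervalIntegrable_iff_integrableOn_Ioc_of_le ht0.le] at h_rpow
  have h_bdd := (Integrable.mul_prod h_beta h_rpow).mul_bdd (c := (1 - t) ^ (-(A + 1)))
    (g := fun z : ℝ × ℝ => (1 - z.2 * z.1) ^ (-(A + 1)))
    (Measurable.aestronglyMeasurable (by fun_prop))
    (by
      rw [Measure.prod_restrict]
      refine ae_restrict_of_forall_mem (measurableSet_Ioc.prod measurableSet_Ioc) ?_
      rintro ⟨y, s⟩ ⟨hy, hs⟩
      have h_le : 1 - t ≤ 1 - s * y := by
        have := mul_le_mul hs.2 hy.2 hy.1.le ht0.le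
        simp only at this
        linarith
      have h_t : 0 < 1 - t := by linarith
      rw [Real.norm_of_nonneg (Real.rpow_nonneg (h_t.le.trans h_le) _)]
      exact Real.rpow_le_rpow_of_nonpos h_t h_le (by linarith))
  refine h_bdd.congr (Filter.Eventually.of_forall fun z => ?_)
  simp only [Function.uncurry]
  ring

/-- An Euler integral whose parameters satisfy `p + q = A + 1` is an incomplete Beta integral. -/
theorem integral_beta_mul_one_sub_mul_eq_incomplete {p q A t : ℝ} (hp : 0 < p) (hq : 0 < q)
    (hA : 0 < A) (hpq : p + q = A + 1) (ht0 : 0 < t) (ht1 : t < 1) :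
    t ^ A * ∫ y in (0:ℝ)..1, y ^ (p - 1) * (1 - y) ^ (q - 1) * (1 - t * y) ^ (-A) =
      A * ProbabilityTheory.beta p q * ∫ s in (0:ℝ)..t, s ^ (A - 1) * (1 - s) ^ (-p) := by
  have h_swap := integral_integral_swap (integrable_euler_kernel hp hq hA ht0 ht1)
  simp only [← intervalIntegral.integral_of_le zero_le_one,
    ← intervalIntegral.integral_of_le ht0.le] at h_swap
  have h_left : (∫ y in (0:ℝ)..1, ∫ s in (0:ℝ)..t,
      y ^ (p - 1) * (1 - y) ^ (q - 1) * (s ^ (A - 1) * (1 - s * y) ^ (-(A + 1)))) =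
      t ^ A / A * ∫ y in (0:ℝ)..1, y ^ (p - 1) * (1 - y) ^ (q - 1) * (1 - t * y) ^ (-A) := by
    rw [← intervalIntegral.integral_const_mul]
    refine intervalIntegral.integral_congr_Ioo_of_le zero_le_one fun y hy => ?_
    simp only [intervalIntegral.integral_const_mul]
    rw [integral_rpow_mul_one_sub_mul_rpow hA ht0 ht1 hy.2.le]
    ring
  have h_right : (∫ s in (0:ℝ)..t, ∫ y in (0:ℝ)..1,
      y ^ (p - 1) * (1 - y) ^ (q - 1) * (s ^ (A - 1) * (1 - s * y) ^ (-(A + 1)))) =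
      ProbabilityTheory.beta p q * ∫ s in (0:ℝ)..t, s ^ (A - 1) * (1 - s) ^ (-p) := by
    rw [← intervalIntegral.integral_const_mul]
    refine intervalIntegral.integral_congr_Ioo_of_le ht0.le fun s hs => ?_
    have h_beta := integral_beta_mul_one_sub_mul hp hq hs.1.le (hs.2.trans ht1)
    rw [hpq] at h_beta
    trans s ^ (A - 1) * ((1 - s) ^ (-p) * ProbabilityTheory.beta p q)
    · rw [← h_beta, ← intervalIntegral.integral_const_mul]
      refine intervalIntegral.integral_congr fun y _ => ?_
      ring
    · ring
  rw [h_left, h_right] at h_swap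
  rw [mul_assoc, ← h_swap, ← mul_assoc, mul_div_cancel₀ _ hA.ne']

/-- The Möbius substitution `y = (x + 1) (1 - u) / (2 (x - u))` turns the hitting density of
`(-1, 1)` into an Euler integral. -/
theorem integral_hitting_density_eq_euler (a b : ℝ) {x : ℝ} (hx : 1 < x) :
    (x + 1) ^ a * (x - 1) ^ b *
      ∫ u in (-1:ℝ)..1, (1 + u) ^ (-a) * (1 - u) ^ (-b) * (x - u)⁻¹ =
    (2 / (x + 1)) ^ (1 - (a + b)) * ∫ y in (0:ℝ)..1,
      y ^ (-b) * (1 - y) ^ (-a) * (1 - 2 / (x + 1) * y) ^ (-(1 - (a + b))) := by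
  have hp : 0 < x + 1 := by linarith
  have hm : 0 < x - 1 := by linarith
  have h_le : (-1:ℝ) ≤ 1 := by norm_num
  have h_pos : ∀ u ∈ Set.Icc (-1:ℝ) 1, 0 < x - u := fun u hu => by linarith [hu.2]
  have h_deriv : ∀ u ∈ Set.Icc (-1:ℝ) 1, HasDerivAt
      (fun u => (x + 1) * (1 - u) / (2 * (x - u)))
      (-((x + 1) * (x - 1) / (2 * (x - u) ^ 2))) u := fun u hu => by
    have hu' := (h_pos u hu).ne'
    have h_num : HasDerivAt (fun u : ℝ => (x + 1) * (1 - u)) (-(x + 1)) u := by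
      simpa using ((hasDerivAt_id u).const_sub 1).const_mul (x + 1)
    have h_den : HasDerivAt (fun u : ℝ => 2 * (x - u)) (-2) u := by
      simpa using ((hasDerivAt_id u).const_sub x).const_mul 2
    convert! h_num.div h_den (by positivity) using 1
    field_simp
    ring
  have h_sub := intervalIntegral.integral_comp_mul_deriv_of_deriv_nonpos (a := -1) (b := 1)
    (f := fun u => (x + 1) * (1 - u) / (2 * (x - u)))
    (f' := fun u => -((x + 1) * (x - 1) / (2 * (x - u) ^ 2)))
    (g := fun y => y ^ (-b) * (1 - y) ^ (-a) * (1 - 2 / (x + 1) * y) ^ (-(1 - (a + b))))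
    (by
      rw [Set.uIcc_of_le h_le]
      exact fun u hu => (h_deriv u hu).continuousAt.continuousWithinAt)
    (by
      rw [min_eq_left h_le, max_eq_right h_le]
      exact fun u hu => h_deriv u (Set.Ioo_subset_Icc_self hu))
    (fun u _ => neg_nonpos.mpr (by positivity))
  have h_start : (x + 1) * (1 - (-1)) / (2 * (x - (-1))) = 1 := by
    rw [div_eq_one_iff_eq (by linarith)]
    ring
  simp only [h_start, sub_self, mul_zero, zero_div] at h_sub
  rw [intervalIntegral.integral_symm 0 1] at h_sub
  rw [← neg_eq_iff_eq_neg.mpr h_sub, ← intervalIntegral.integral_neg,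
    ← intervalIntegral.integral_const_mul, ← intervalIntegral.integral_const_mul]
  refine intervalIntegral.integral_congr_Ioo_of_le h_le fun u hu => ?_
  have hd := h_pos u (Set.Ioo_subset_Icc_self hu)
  have hu0 : 0 < 1 + u := by linarith [hu.1]
  have hu1 : 0 < 1 - u := by linarith [hu.2]
  have h_two : (0:ℝ) < 2 := two_pos
  have h_one_sub : 1 - (x + 1) * (1 - u) / (2 * (x - u)) =
      (x - 1) * (1 + u) / (2 * (x - u)) := by
    field_simp
    ring
  have h_one_sub_mul : 1 - 2 / (x + 1) * ((x + 1) * (1 - u) / (2 * (x - u))) =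
      (x - 1) / (x - u) := by
    field_simp
    ring
  have h_weight : (x + 1) * (x - 1) / (2 * (x - u) ^ 2) = (x + 1) ^ (1:ℝ) * (x - 1) ^ (1:ℝ) *
      ((2:ℝ) ^ (-1:ℝ) * (x - u) ^ (-2:ℝ)) := by
    rw [Real.rpow_neg hd.le, Real.rpow_neg h_two.le, Real.rpow_one, Real.rpow_one, Real.rpow_one,
      Real.rpow_two, div_eq_mul_inv, mul_inv]
  simp only [Function.comp_apply, mul_neg, neg_neg]
  rw [h_one_sub, h_one_sub_mul, h_weight, ← Real.rpow_neg_one (x - u)]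
  simp only [Real.rpow_def_of_pos (div_pos (mul_pos hp hu1) (mul_pos h_two hd)),
    Real.rpow_def_of_pos (div_pos (mul_pos hm hu0) (mul_pos h_two hd)),
    Real.rpow_def_of_pos (div_pos hm hd), Real.rpow_def_of_pos (div_pos h_two hp),
    Real.rpow_def_of_pos hp, Real.rpow_def_of_pos hm, Real.rpow_def_of_pos hd,
    Real.rpow_def_of_pos hu0, Real.rpow_def_of_pos hu1, Real.rpow_def_of_pos h_two,
    ← Real.exp_add]
  rw [Real.log_div (mul_pos hp hu1).ne' (mul_pos h_two hd).ne',
    Real.log_div (mul_pos hm hu0).ne' (mul_pos h_two hd).ne', Real.log_div hm.ne' hd.ne',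
    Real.log_div h_two.ne' hp.ne', Real.log_mul hp.ne' hu1.ne', Real.log_mul hm.ne' hu0.ne',
    Real.log_mul h_two.ne' hd.ne']
  congr 1
  ring

theorem hitting_probability_integral_identity
    (α ρ : ℝ) (hα : α ∈ Set.Ioo (0:ℝ) 1) (hρ : ρ ∈ Set.Ioo (0:ℝ) 1)
    (x : ℝ) (hx : 1 < x) :
    Real.sin (Real.pi * α * (1 - ρ)) / Real.pi * (x + 1) ^ (α * ρ) *
        (x - 1) ^ (α * (1 - ρ)) *
      ∫ u in (-1:ℝ)..1,
        (1 + u) ^ (-(α * ρ)) * (1 - u) ^ (-(α * (1 - ρ))) * (x - u)⁻¹ =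
    Real.Gamma (1 - α * ρ) / (Real.Gamma (α * (1 - ρ)) * Real.Gamma (1 - α)) *
      ∫ s in (0:ℝ)..(2 / (x + 1)), s ^ (-α) * (1 - s) ^ (α * (1 - ρ) - 1) := by
  obtain ⟨hα0, hα1⟩ := hα
  obtain ⟨hρ0, hρ1⟩ := hρ
  have ha : 0 < α * ρ := mul_pos hα0 hρ0
  have hb : 0 < α * (1 - ρ) := mul_pos hα0 (by linarith)
  have hab : α * ρ + α * (1 - ρ) = α := by ring
  rw [mul_assoc Real.pi]
  generalize α * ρ = a at *
  generalize α * (1 - ρ) = b at *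
  have hp : 0 < 1 - b := by linarith
  have hq : 0 < 1 - a := by linarith
  have hA : 0 < 1 - α := by linarith
  have ht0 : 0 < 2 / (x + 1) := div_pos two_pos (by linarith)
  have ht1 : 2 / (x + 1) < 1 := (div_lt_one (by linarith)).mpr (by linarith)
  have h_density := integral_hitting_density_eq_euler a b hx
  have h_euler := integral_beta_mul_one_sub_mul_eq_incomplete hp hq hA (by linarith) ht0 ht1
  have h_reflect := Real.Gamma_mul_Gamma_one_sub b
  have h_sin : Real.sin (Real.pi * b) ≠ 0 :=
    (Real.sin_pos_of_pos_of_lt_pi (mul_pos Real.pi_pos hb)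
      (mul_lt_of_lt_one_right Real.pi_pos (by linarith))).ne'
  have h_const : Real.sin (Real.pi * b) / Real.pi *
      ((1 - α) * ProbabilityTheory.beta (1 - b) (1 - a)) =
      Real.Gamma (1 - a) / (Real.Gamma b * Real.Gamma (1 - α)) := by
    have hΓb := (Real.Gamma_pos_of_pos hb).ne'
    have hΓp := (Real.Gamma_pos_of_pos hp).ne'
    have hΓA := (Real.Gamma_pos_of_pos hA).ne'
    have h_inv : Real.sin (Real.pi * b) / Real.pi = (Real.Gamma b * Real.Gamma (1 - b))⁻¹ := by
      rw [h_reflect, inv_div]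
    rw [h_inv, ProbabilityTheory.beta, show 1 - b + (1 - a) = 1 - α + 1 by linarith,
      Real.Gamma_add_one hA.ne']
    field_simp
  rw [hab] at h_density
  simp only [sub_sub_cancel_left, neg_sub] at h_density h_euler
  rw [← h_const, mul_assoc _ ((x + 1) ^ a), mul_assoc, h_density, h_euler]
  simp only [mul_assoc]
end

section
/- Let α ∈ (1,2), ρ ∈ (1−1/α, 1/α), ρ̂ = 1−ρ. Then for every y > 0, ∫_0^∞ (1−e^{−y−z})^{αρ̂−1} e^{−z} (1−e^{−z})^{αρ−1} dz = (1−e^{−y})^{α−1} e^{αρ y} ∫_0^{e^{−y}} t^{αρ−1} (1−t)^{−α} dt, and for every y < 0, ∫_{−y}^∞ (1−e^{−y−z})^{αρ̂−1} e^{−z} (1−e^{−z})^{αρ−1} dz = (1−e^{y})^{α−1} e^{(1−αρ̂)y} ∫_0^{e^{y}} t^{αρ̂−1} (1−t)^{−α} dt. -/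
open MeasureTheory

/-- The incomplete beta-type integral of `t ^ (a - 1) * (1 - t) ^ (-(a + b))` over `(0, c)`, evaluated
through the substitution `t = c * (1 - exp (-z)) / (1 - c * exp (-z))`. -/
theorem integral_Ioi_one_sub_mul_exp_rpow {c : ℝ} (hc0 : 0 < c) (hc1 : c < 1) (a b : ℝ) :
    ∫ z in Set.Ioi (0:ℝ), (1 - c * Real.exp (-z)) ^ (b - 1) * Real.exp (-z) *
        (1 - Real.exp (-z)) ^ (a - 1) =
      (1 - c) ^ (a + b - 1) * c ^ (-a) *
        ∫ t in (0:ℝ)..c, t ^ (a - 1) * (1 - t) ^ (-(a + b)) := by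
  have hc : 0 < 1 - c := by linarith
  have exp_lt : ∀ z ∈ Set.Ioi (0:ℝ), Real.exp (-z) < 1 := fun z hz =>
    Real.exp_lt_one_iff.mpr (neg_lt_zero.mpr hz)
  have den_pos : ∀ z ∈ Set.Ioi (0:ℝ), 0 < 1 - c * Real.exp (-z) := fun z hz => by
    nlinarith [exp_lt z hz, Real.exp_pos (-z)]
  set f : ℝ → ℝ := fun z => c * (1 - Real.exp (-z)) / (1 - c * Real.exp (-z)) with hf
  have image_f : f '' Set.Ioi 0 = Set.Ioo 0 c := by
    ext t
    constructor
    · rintro ⟨z, hz, rfl⟩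
      have h1 := exp_lt z hz
      have h2 := den_pos z hz
      refine ⟨div_pos (mul_pos hc0 (by linarith)) h2, ?_⟩
      rw [hf]
      simp only
      rw [div_lt_iff₀ h2]
      nlinarith [mul_pos (mul_pos hc0 hc) (Real.exp_pos (-z))]
    · rintro ⟨ht0, htc⟩
      have h1 : 0 < 1 - t := by linarith
      have hw : 0 < (c - t) / (c * (1 - t)) := div_pos (by linarith) (mul_pos hc0 h1)
      refine ⟨-Real.log ((c - t) / (c * (1 - t))), ?_, ?_⟩
      · rw [Set.mem_Ioi, Left.neg_pos_iff]
        refine Real.log_neg hw ?_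
        rw [div_lt_one (mul_pos hc0 h1)]
        nlinarith
      · simp only [hf, neg_neg, Real.exp_log hw]
        have h2 : 1 - c * ((c - t) / (c * (1 - t))) = (1 - c) / (1 - t) := by
          field_simp
          ring
        rw [h2]
        field_simp
        ring
  have inj_f : Set.InjOn f (Set.Ioi 0) := by
    intro x hx y hy hxy
    have h1 := den_pos x hx
    have h2 := den_pos y hy
    simp only [hf] at hxy
    rw [div_eq_div_iff h1.ne' h2.ne'] at hxy
    have h3 : c * (1 - c) * (Real.exp (-x) - Real.exp (-y)) = 0 := by linear_combination -hxy
    have h4 : Real.exp (-x) = Real.exp (-y) :=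
      sub_eq_zero.mp ((mul_eq_zero.mp h3).resolve_left (mul_pos hc0 hc).ne')
    exact neg_injective (Real.exp_injective h4)
  have deriv_f : ∀ z ∈ Set.Ioi (0:ℝ), HasDerivWithinAt f
      (c * (1 - c) * Real.exp (-z) / (1 - c * Real.exp (-z)) ^ 2) (Set.Ioi 0) z := by
    intro z hz
    have he : HasDerivAt (fun z : ℝ => Real.exp (-z)) (-Real.exp (-z)) z := by
      simpa using (hasDerivAt_neg z).exp
    have h := ((he.const_sub 1).const_mul c).div ((he.const_mul c).const_sub 1) (den_pos z hz).ne'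
    refine (h.congr_deriv ?_).hasDerivWithinAt
    congr 1
    ring
  rw [intervalIntegral.integral_of_le hc0.le, integral_Ioc_eq_integral_Ioo, ← image_f,
    integral_image_eq_integral_abs_deriv_smul measurableSet_Ioi deriv_f inj_f,
    ← integral_const_mul]
  refine setIntegral_congr_fun measurableSet_Ioi fun z hz => ?_
  have hD := den_pos z hz
  have hE : 0 < 1 - Real.exp (-z) := sub_pos.mpr (exp_lt z hz)
  have hw := Real.exp_pos (-z)
  have h1f : 1 - f z = (1 - c) / (1 - c * Real.exp (-z)) := by
    simp only [hf]
    field_simp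
    ring
  simp only [smul_eq_mul]
  rw [h1f, abs_of_pos (by positivity)]
  simp only [hf]
  generalize Real.exp (-z) = w at *
  rw [Real.div_rpow (by positivity) hD.le, Real.mul_rpow hc0.le hE.le, Real.div_rpow hc.le hD.le]
  generalize 1 - c * w = D at *
  have hc_pow : c ^ (-a) * c * c ^ (a - 1) = 1 := by
    rw [← Real.rpow_add_one hc0.ne', ← Real.rpow_add hc0]
    ring_nf
    exact Real.rpow_zero c
  have hcc_pow : (1 - c) ^ (a + b - 1) * (1 - c) * (1 - c) ^ (-(a + b)) = 1 := by
    rw [← Real.rpow_add_one hc.ne', ← Real.rpow_add hc]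
    ring_nf
    exact Real.rpow_zero _
  have hD_pow : D ^ (b - 1) * D ^ 2 * D ^ (a - 1) = (D ^ (-(a + b)))⁻¹ := by
    rw [← Real.rpow_natCast D 2, ← Real.rpow_add hD, ← Real.rpow_add hD, ← Real.rpow_neg hD.le]
    congr 1
    push_cast
    ring
  have hDb : D ^ (b - 1) = (D ^ (-(a + b)))⁻¹ / (D ^ 2 * D ^ (a - 1)) := by
    rw [← hD_pow, mul_assoc, mul_div_cancel_right₀ _ (by positivity)]
  rw [hDb]
  calc _ = (c ^ (-a) * c * c ^ (a - 1)) *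
        ((1 - c) ^ (a + b - 1) * (1 - c) * (1 - c) ^ (-(a + b))) *
        ((D ^ (-(a + b)))⁻¹ / (D ^ 2 * D ^ (a - 1)) * w * (1 - w) ^ (a - 1)) := by
        rw [hc_pow, hcc_pow, one_mul, one_mul]
    _ = _ := by
        field_simp

theorem conditioned_process_potential_density
    (α ρ : ℝ) (hα : α ∈ Set.Ioo (1:ℝ) 2) (hρ : ρ ∈ Set.Ioo (1 - 1/α) (1/α)) :
    (∀ y : ℝ, 0 < y →
      ∫ z in Set.Ioi (0:ℝ),
          (1 - Real.exp (-y - z)) ^ (α * (1 - ρ) - 1) * Real.exp (-z) *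
            (1 - Real.exp (-z)) ^ (α * ρ - 1) =
        (1 - Real.exp (-y)) ^ (α - 1) * Real.exp (α * ρ * y) *
          ∫ t in (0:ℝ)..(Real.exp (-y)), t ^ (α * ρ - 1) * (1 - t) ^ (-α)) ∧
    (∀ y : ℝ, y < 0 →
      ∫ z in Set.Ioi (-y),
          (1 - Real.exp (-y - z)) ^ (α * (1 - ρ) - 1) * Real.exp (-z) *
            (1 - Real.exp (-z)) ^ (α * ρ - 1) =
        (1 - Real.exp y) ^ (α - 1) * Real.exp ((1 - α * (1 - ρ)) * y) *
          ∫ t in (0:ℝ)..(Real.exp y), t ^ (α * (1 - ρ) - 1) * (1 - t) ^ (-α)) := by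
  have hexp : α * ρ + α * (1 - ρ) = α := by ring
  refine ⟨fun y hy => ?_, fun y hy => ?_⟩
  · have h := integral_Ioi_one_sub_mul_exp_rpow (Real.exp_pos (-y))
      (Real.exp_lt_one_iff.mpr (neg_lt_zero.mpr hy)) (α * ρ) (α * (1 - ρ))
    rw [hexp, ← Real.exp_mul] at h
    simp only [← Real.exp_add] at h
    have hpow : -y * -(α * ρ) = α * ρ * y := by ring
    rw [hpow] at h
    exact h
  · have h := integral_Ioi_one_sub_mul_exp_rpow (Real.exp_pos y)
      (Real.exp_lt_one_iff.mpr hy) (α * (1 - ρ)) (α * ρ)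
    rw [add_comm, hexp, ← Real.exp_mul] at h
    have himage : (fun z : ℝ => z + -y) '' Set.Ioi 0 = Set.Ioi (-y) := by simp
    rw [← himage, integral_image_eq_integral_abs_deriv_smul measurableSet_Ioi
      (fun z _ => ((hasDerivAt_id' z).add_const (-y)).hasDerivWithinAt)
      (add_left_injective (-y)).injOn]
    have hmul : Real.exp ((1 - α * (1 - ρ)) * y) =
        Real.exp y * Real.exp (y * -(α * (1 - ρ))) := by
      rw [← Real.exp_add]
      ring_nf
    rw [hmul, mul_left_comm, mul_assoc, ← h, ← integral_const_mul]
    refine integral_congr_ae (.of_forall fun z => ?_)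
    have hz : Real.exp (-(z + -y)) = Real.exp y * Real.exp (-z) := by
      rw [← Real.exp_add]
      ring_nf
    have hyz : -y - (z + -y) = -z := by ring
    simp only [hz, hyz, abs_one, one_smul]
    ring
end

section
/- Let α ∈ (1,2), ρ ∈ (1−1/α, 1/α), ρ̂ = 1−ρ, and x > 1. Then ∫_{−1}^{1} (sin(παρ̂)/π) (1+y)^{−αρ} (1−y)^{−αρ̂} · [ (x+1)^{αρ} (x−1)^{αρ̂} (x−y)^{−1} − (α−1) ∫_1^{x} (t−1)^{αρ̂−1} (t+1)^{αρ−1} dt ] dy = 1. -/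
open MeasureTheory Set

lemma integrableOn_integral_rpow_mul_one_sub_rpow {u v : ℝ} (hu : 0 < u) (hv : 0 < v) :
    IntegrableOn (fun x : ℝ => x ^ (u - 1) * (1 - x) ^ (v - 1)) (Ioo 0 1) ∧
      ∫ x in Ioo (0 : ℝ) 1, x ^ (u - 1) * (1 - x) ^ (v - 1) = ProbabilityTheory.beta u v := by
  have hcast : EqOn (fun x : ℝ => (x : ℂ) ^ ((u : ℂ) - 1) * (1 - (x : ℂ)) ^ ((v : ℂ) - 1))
      (fun x : ℝ => ((x ^ (u - 1) * (1 - x) ^ (v - 1) : ℝ) : ℂ)) (Ioo 0 1) := by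
    intro x hx
    have h1 : 0 ≤ 1 - x := by linarith [hx.2]
    simp only [Complex.ofReal_mul, Complex.ofReal_cpow hx.1.le, Complex.ofReal_cpow h1,
      Complex.ofReal_sub, Complex.ofReal_one]
  have hc : IntegrableOn (fun x : ℝ => (x : ℂ) ^ ((u : ℂ) - 1) * (1 - (x : ℂ)) ^ ((v : ℂ) - 1))
      (Ioo 0 1) :=
    (intervalIntegrable_iff_integrableOn_Ioo_of_le zero_le_one).1
      (Complex.betaIntegral_convergent (by simpa using hu) (by simpa using hv))
  refine ⟨?_, ?_⟩
  · simpa [IntegrableOn] using (hc.congr_fun hcast measurableSet_Ioo).re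
  · rw [ProbabilityTheory.beta_eq_betaIntegralReal u v hu hv, Complex.betaIntegral,
      intervalIntegral.integral_of_le zero_le_one, integral_Ioc_eq_integral_Ioo,
      setIntegral_congr_fun measurableSet_Ioo hcast, integral_complex_ofReal, Complex.ofReal_re]

section Moebius

variable {p q : ℝ}

lemma hasDerivAt_div_add_mul (hp : 0 < p) (hq : 0 < q) {s : ℝ} (hs : 0 < s) :
    HasDerivAt (fun s => p / (p + q * s)) (-(p * q / (p + q * s) ^ 2)) s := by
  have hD : p + q * s ≠ 0 := by positivity
  convert! (hasDerivAt_const s p).div (((hasDerivAt_id s).const_mul q).const_add p) hD using 1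
  simp; ring

lemma image_div_add_mul_Ioi (hp : 0 < p) (hq : 0 < q) :
    (fun s => p / (p + q * s)) '' Ioi 0 = Ioo 0 1 := by
  ext u
  constructor
  · rintro ⟨s, hs, rfl⟩
    have hs : 0 < s := hs
    refine ⟨by positivity, ?_⟩
    rw [div_lt_one (by positivity)]
    linarith [mul_pos hq hs]
  · rintro ⟨h0, h1⟩
    have h1 : 0 < 1 - u := by linarith
    refine ⟨p * (1 - u) / (q * u), by simp only [mem_Ioi]; positivity, ?_⟩
    field_simp
    ring

lemma injOn_div_add_mul (hp : 0 < p) (hq : 0 < q) :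
    InjOn (fun s => p / (p + q * s)) (Ioi 0) := by
  intro s hs t ht h
  have hs : 0 < s := hs
  have ht : 0 < t := ht
  have h1 : p + q * s ≠ 0 := by positivity
  have h2 : p + q * t ≠ 0 := by positivity
  rw [div_eq_div_iff h1 h2] at h
  have := mul_left_cancel₀ hp.ne' h
  have := mul_left_cancel₀ hq.ne' (add_left_cancel this)
  exact this.symm

/-- The substitution `u = p / (p + q s)` maps `(0, ∞)` onto `(0, 1)`. -/
lemma integrableOn_integral_Ioo_of_moebius (hp : 0 < p) (hq : 0 < q) {f g : ℝ → ℝ}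
    (hfg : ∀ s, 0 < s → p * q / (p + q * s) ^ 2 * f (p / (p + q * s)) = g s) :
    (IntegrableOn f (Ioo 0 1) ↔ IntegrableOn g (Ioi 0)) ∧
      ∫ u in Ioo 0 1, f u = ∫ s in Ioi 0, g s := by
  have hd : ∀ s ∈ Ioi (0 : ℝ), HasDerivWithinAt (fun s => p / (p + q * s))
      (-(p * q / (p + q * s) ^ 2)) (Ioi 0) s :=
    fun s hs => (hasDerivAt_div_add_mul hp hq hs).hasDerivWithinAt
  have hE : EqOn (fun s => |-(p * q / (p + q * s) ^ 2)| • f (p / (p + q * s))) g (Ioi 0) := by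
    intro s hs
    have hs : 0 < s := hs
    simp only [abs_neg, smul_eq_mul]
    rw [abs_of_pos (by positivity), hfg s hs]
  rw [← image_div_add_mul_Ioi hp hq,
    integrableOn_image_iff_integrableOn_abs_deriv_smul measurableSet_Ioi hd
      (injOn_div_add_mul hp hq),
    integral_image_eq_integral_abs_deriv_smul measurableSet_Ioi hd (injOn_div_add_mul hp hq)]
  exact ⟨integrableOn_congr_fun hE measurableSet_Ioi, setIntegral_congr_fun measurableSet_Ioi hE⟩

lemma beta_weight_moebius (hp : 0 < p) (hq : 0 < q) (a b : ℝ) {s : ℝ} (hs : 0 < s) :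
    p * q / (p + q * s) ^ 2 *
      ((p / (p + q * s)) ^ (-a) * (1 - p / (p + q * s)) ^ (-b)) =
      p ^ (1 - a) * q ^ (1 - b) * (s ^ (-b) * (p + q * s) ^ (a + b - 2)) := by
  have hD : 0 < p + q * s := by positivity
  have h1 : 1 - p / (p + q * s) = q * s / (p + q * s) := by field_simp; ring
  rw [h1, Real.div_rpow hp.le hD.le, Real.div_rpow (by positivity) hD.le,
    Real.mul_rpow hq.le hs.le, sub_eq_add_neg 1 a, sub_eq_add_neg 1 b, Real.rpow_add hp,
    Real.rpow_add hq, Real.rpow_one, Real.rpow_one, Real.rpow_sub hD, Real.rpow_add hD,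
    Real.rpow_neg hD.le, Real.rpow_neg hD.le, Real.rpow_two]
  have := Real.rpow_pos_of_pos hD a
  have := Real.rpow_pos_of_pos hD b
  field_simp

lemma integrableOn_integral_beta_moebius {a b : ℝ} (ha : a < 1) (hb : b < 1)
    (hp : 0 < p) (hq : 0 < q) :
    IntegrableOn (fun s : ℝ => s ^ (-b) * (p + q * s) ^ (a + b - 2)) (Ioi 0) ∧
      p ^ (1 - a) * q ^ (1 - b) * ∫ s in Ioi (0 : ℝ), s ^ (-b) * (p + q * s) ^ (a + b - 2) =
        ProbabilityTheory.beta (1 - a) (1 - b) := by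
  obtain ⟨h1, h2⟩ := integrableOn_integral_rpow_mul_one_sub_rpow (u := 1 - a) (v := 1 - b)
    (by linarith) (by linarith)
  simp only [sub_sub_cancel_left] at h1 h2
  obtain ⟨h3, h4⟩ := integrableOn_integral_Ioo_of_moebius hp hq
    (f := fun u => u ^ (-a) * (1 - u) ^ (-b)) (fun s hs => beta_weight_moebius hp hq a b hs)
  refine ⟨?_, by rw [← h2, h4, integral_const_mul]⟩
  have hc : IsUnit (p ^ (1 - a) * q ^ (1 - b)) := by
    have : 0 < p ^ (1 - a) * q ^ (1 - b) := by positivity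
    exact this.ne'.isUnit
  exact (integrable_const_mul_iff hc _).1 (h3.1 h1)

end Moebius

/-- The Mellin transform of `s ↦ (1 + s)⁻¹`. -/
lemma integrableOn_integral_rpow_neg_div_one_add {b : ℝ} (h0 : 0 < b) (h1 : b < 1) :
    IntegrableOn (fun s : ℝ => s ^ (-b) / (1 + s)) (Ioi 0) ∧
      ∫ s in Ioi (0 : ℝ), s ^ (-b) / (1 + s) = Real.pi / Real.sin (Real.pi * b) := by
  obtain ⟨h2, h3⟩ := integrableOn_integral_beta_moebius (a := 1 - b) (b := b) (p := 1) (q := 1)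
    (by linarith) h1 one_pos one_pos
  have hE : EqOn (fun s : ℝ => s ^ (-b) * (1 + 1 * s) ^ (1 - b + b - 2))
      (fun s : ℝ => s ^ (-b) / (1 + s)) (Ioi 0) := by
    intro s hs
    have hs : 0 < s := hs
    have : 1 - b + b - 2 = -1 := by ring
    simp only [this, one_mul, Real.rpow_neg_one, div_eq_mul_inv]
  refine ⟨h2.congr_fun hE measurableSet_Ioi, ?_⟩
  rw [← setIntegral_congr_fun measurableSet_Ioi hE, ← Real.Gamma_mul_Gamma_one_sub]
  simpa [ProbabilityTheory.beta] using h3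

lemma integral_add_add_sub_mul_rpow {c s x : ℝ} (hc : 0 < c) (hs : 0 < s) :
    ∫ t in (1 : ℝ)..x, (t + 1 + (t - 1) * s) ^ (c - 1) =
      ((x + 1 + (x - 1) * s) ^ c - 2 ^ c) / (c * (1 + s)) := by
  have h1 : ∀ t : ℝ, t + 1 + (t - 1) * s = (1 + s) * t + (1 - s) := fun t => by ring
  have hs1 : 1 + s ≠ 0 := by positivity
  simp_rw [h1]
  rw [intervalIntegral.integral_comp_mul_add (fun r => r ^ (c - 1)) hs1, integral_rpow (by
    left; linarith)]
  have h2 : (1 + s) * 1 + (1 - s) = 2 := by ring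
  rw [h2, sub_add_cancel, smul_eq_mul]
  field_simp

lemma integrableOn_integral_resolvent_moebius {a b x : ℝ} (ha : a < 1) (hb : b < 1)
    (hx : 1 < x) :
    IntegrableOn (fun u : ℝ => u ^ (-a) * (1 - u) ^ (-b) * (x + 1 - 2 * u)⁻¹) (Ioo 0 1) ∧
    IntegrableOn (fun s : ℝ => s ^ (-b) / (1 + s) * (x + 1 + (x - 1) * s) ^ (a + b - 1))
      (Ioi 0) ∧
    (x + 1) ^ a * (x - 1) ^ b *
      ∫ u in Ioo (0 : ℝ) 1, u ^ (-a) * (1 - u) ^ (-b) * (x + 1 - 2 * u)⁻¹ =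
      ∫ s in Ioi (0 : ℝ), s ^ (-b) / (1 + s) * (x + 1 + (x - 1) * s) ^ (a + b - 1) := by
  have hp : 0 < x + 1 := by linarith
  have hq : 0 < x - 1 := by linarith
  obtain ⟨h1, -⟩ := integrableOn_integral_rpow_mul_one_sub_rpow (u := 1 - a) (v := 1 - b)
    (by linarith) (by linarith)
  simp only [sub_sub_cancel_left] at h1
  have hint : IntegrableOn (fun u : ℝ => u ^ (-a) * (1 - u) ^ (-b) * (x + 1 - 2 * u)⁻¹)
      (Ioo 0 1) := by
    rw [← intervalIntegrable_iff_integrableOn_Ioo_of_le zero_le_one] at h1 ⊢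
    refine h1.mul_continuousOn (ContinuousOn.inv₀ (by fun_prop) ?_)
    intro u hu
    rw [uIcc_of_le zero_le_one] at hu
    have : 0 < x + 1 - 2 * u := by linarith [hu.2]
    exact this.ne'
  obtain ⟨h3, h4⟩ := integrableOn_integral_Ioo_of_moebius hp hq
    (f := fun u => (x + 1) ^ a * (x - 1) ^ b * (u ^ (-a) * (1 - u) ^ (-b) * (x + 1 - 2 * u)⁻¹))
    (g := fun s => s ^ (-b) / (1 + s) * (x + 1 + (x - 1) * s) ^ (a + b - 1)) (by
      intro s hs
      have hD : 0 < x + 1 + (x - 1) * s := by positivity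
      have hs1 : 0 < 1 + s := by positivity
      have hr : x + 1 - 2 * ((x + 1) / (x + 1 + (x - 1) * s)) =
          (x + 1) * (x - 1) * (1 + s) / (x + 1 + (x - 1) * s) := by
        field_simp; ring
      have hw := beta_weight_moebius hp hq a b hs
      have hDp : (x + 1 + (x - 1) * s) ^ (a + b - 1) =
          (x + 1 + (x - 1) * s) ^ (a + b - 2) * (x + 1 + (x - 1) * s) := by
        rw [← Real.rpow_add_one hD.ne']; congr 1; ring
      calc _ = (x + 1) ^ a * (x - 1) ^ b *
            ((x + 1) * (x - 1) / (x + 1 + (x - 1) * s) ^ 2 *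
              (((x + 1) / (x + 1 + (x - 1) * s)) ^ (-a) *
                (1 - (x + 1) / (x + 1 + (x - 1) * s)) ^ (-b))) *
            ((x + 1) * (x - 1) * (1 + s) / (x + 1 + (x - 1) * s))⁻¹ := by rw [hr]; ring
        _ = _ := by
          rw [hw, hDp, Real.rpow_sub hp, Real.rpow_sub hq, Real.rpow_one, Real.rpow_one]
          have := Real.rpow_pos_of_pos hp a
          have := Real.rpow_pos_of_pos hq b
          field_simp)
  refine ⟨hint, h3.1 (hint.const_mul _), ?_⟩
  rw [← h4, integral_const_mul]

/-- Fubini for the product of the beta constant and the incomplete beta integral. -/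
lemma beta_mul_integral_eq {a b x : ℝ} (ha : a < 1) (hb0 : 0 < b) (hb : b < 1)
    (hab : 1 < a + b) (hx : 1 < x) :
    ProbabilityTheory.beta (1 - a) (1 - b) *
        ∫ t in (1 : ℝ)..x, (t - 1) ^ (b - 1) * (t + 1) ^ (a - 1) =
      ∫ s in Ioi (0 : ℝ), s ^ (-b) *
        (((x + 1 + (x - 1) * s) ^ (a + b - 1) - 2 ^ (a + b - 1)) / ((a + b - 1) * (1 + s))) := by
  set f : ℝ → ℝ → ℝ := fun s t => s ^ (-b) * (t + 1 + (t - 1) * s) ^ (a + b - 2) with hf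
  have hinner : ∀ s : ℝ, 0 < s → ∫ t in Ioc 1 x, f s t = s ^ (-b) *
      (((x + 1 + (x - 1) * s) ^ (a + b - 1) - 2 ^ (a + b - 1)) / ((a + b - 1) * (1 + s))) := by
    intro s hs
    rw [integral_const_mul, ← integral_add_add_sub_mul_rpow (by linarith) hs,
      intervalIntegral.integral_of_le hx.le]
    simp only [show a + b - 1 - 1 = a + b - 2 by ring]
  have hrhs : IntegrableOn (fun s : ℝ => s ^ (-b) *
      (((x + 1 + (x - 1) * s) ^ (a + b - 1) - 2 ^ (a + b - 1)) / ((a + b - 1) * (1 + s))))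
      (Ioi 0) := by
    have h := ((integrableOn_integral_resolvent_moebius ha hb hx).2.1.sub
      ((integrableOn_integral_rpow_neg_div_one_add hb0 hb).1.mul_const
        (2 ^ (a + b - 1)))).const_mul (a + b - 1)⁻¹
    refine h.congr (ae_of_all _ fun s => ?_)
    simp only [Pi.sub_apply, div_eq_mul_inv, mul_inv]
    ring
  have hint : Integrable (Function.uncurry f)
      ((volume.restrict (Ioi 0)).prod (volume.restrict (Ioc 1 x))) := by
    rw [integrable_prod_iff (by
      apply Measurable.aestronglyMeasurable
      simp only [hf, Function.uncurry_def]
      fun_prop)]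
    constructor
    · filter_upwards [ae_restrict_mem measurableSet_Ioi] with s hs
      have hs : 0 < s := hs
      change IntegrableOn (fun t => f s t) (Ioc 1 x)
      refine (ContinuousOn.integrableOn_Icc ?_).mono_set Ioc_subset_Icc_self
      refine continuousOn_const.mul (ContinuousOn.rpow_const (by fun_prop) fun t ht => Or.inl ?_)
      have : 0 ≤ (t - 1) * s := mul_nonneg (by linarith [ht.1]) hs.le
      linarith [ht.1]
    · refine hrhs.congr ?_
      filter_upwards [ae_restrict_mem measurableSet_Ioi] with s hs
      have hs : 0 < s := hs
      rw [← hinner s hs]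
      refine setIntegral_congr_fun measurableSet_Ioc fun t ht => ?_
      have : 0 < t - 1 := by linarith [ht.1]
      have : 0 < t + 1 := by linarith
      have : 0 ≤ f s t := by simp only [hf]; positivity
      exact (Real.norm_of_nonneg this).symm
  calc _ = ∫ t in Ioc 1 x, ∫ s in Ioi 0, f s t := by
        rw [intervalIntegral.integral_of_le hx.le, ← integral_const_mul]
        refine setIntegral_congr_fun measurableSet_Ioc fun t ht => ?_
        have hq : 0 < t - 1 := by linarith [ht.1]
        have hp : 0 < t + 1 := by linarith
        have h := (integrableOn_integral_beta_moebius ha hb hp hq).2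
        simp only [hf]
        rw [← h]
        have h1 : (t + 1) ^ (1 - a) * (t + 1) ^ (a - 1) = 1 := by
          rw [← Real.rpow_add hp]; simp
        have h2 : (t - 1) ^ (1 - b) * (t - 1) ^ (b - 1) = 1 := by
          rw [← Real.rpow_add hq]; simp
        linear_combination (∫ s in Ioi (0 : ℝ), s ^ (-b) *
          (t + 1 + (t - 1) * s) ^ (a + b - 2)) *
          ((t - 1) ^ (1 - b) * (t - 1) ^ (b - 1) * h1 + h2)
    _ = ∫ s in Ioi 0, ∫ t in Ioc 1 x, f s t := (integral_integral_swap hint).symm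
    _ = _ := setIntegral_congr_fun measurableSet_Ioi fun s hs => hinner s hs

lemma integral_Ioo_hitting_density {a b x : ℝ} (ha : a < 1) (hb0 : 0 < b) (hb : b < 1)
    (hab : 1 < a + b) (hx : 1 < x) :
    ∫ u in Ioo (0 : ℝ) 1, u ^ (-a) * (1 - u) ^ (-b) *
        ((x + 1) ^ a * (x - 1) ^ b * (x + 1 - 2 * u)⁻¹ -
          (a + b - 1) * ∫ t in (1 : ℝ)..x, (t - 1) ^ (b - 1) * (t + 1) ^ (a - 1)) =
      2 ^ (a + b - 1) * (Real.pi / Real.sin (Real.pi * b)) := by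
  set K := ∫ t in (1 : ℝ)..x, (t - 1) ^ (b - 1) * (t + 1) ^ (a - 1) with hK
  obtain ⟨h1, h2⟩ := integrableOn_integral_rpow_mul_one_sub_rpow (u := 1 - a) (v := 1 - b)
    (by linarith) (by linarith)
  simp only [sub_sub_cancel_left] at h1 h2
  obtain ⟨h3, h4, h5⟩ := integrableOn_integral_resolvent_moebius ha hb hx
  obtain ⟨h6, h7⟩ := integrableOn_integral_rpow_neg_div_one_add hb0 hb
  have hc : a + b - 1 ≠ 0 := by linarith
  have hBK : (a + b - 1) * (ProbabilityTheory.beta (1 - a) (1 - b) * K) =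
      (∫ s in Ioi (0 : ℝ), s ^ (-b) / (1 + s) * (x + 1 + (x - 1) * s) ^ (a + b - 1)) -
        2 ^ (a + b - 1) * ∫ s in Ioi (0 : ℝ), s ^ (-b) / (1 + s) := by
    rw [hK, beta_mul_integral_eq ha hb0 hb hab hx, ← integral_const_mul, ← integral_const_mul,
      ← integral_sub h4 (h6.const_mul _)]
    refine setIntegral_congr_fun measurableSet_Ioi fun s hs => ?_
    have hs : 0 < 1 + s := add_pos one_pos hs
    field_simp
  calc _ = ∫ u in Ioo (0 : ℝ) 1,
        ((x + 1) ^ a * (x - 1) ^ b * (u ^ (-a) * (1 - u) ^ (-b) * (x + 1 - 2 * u)⁻¹) -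
          (a + b - 1) * K * (u ^ (-a) * (1 - u) ^ (-b))) := by
        congr 1; ext u; ring
    _ = 2 ^ (a + b - 1) * (Real.pi / Real.sin (Real.pi * b)) := by
        rw [integral_sub (h3.const_mul _) (h1.const_mul _), integral_const_mul,
          integral_const_mul, h2, h5, ← h7]
        linear_combination -hBK

theorem hitting_density_integrates_to_one
    (α ρ : ℝ) (hα : α ∈ Set.Ioo (1:ℝ) 2) (hρ : ρ ∈ Set.Ioo (1 - 1/α) (1/α))
    (x : ℝ) (hx : 1 < x) :
    ∫ y in (-1:ℝ)..1,
      Real.sin (Real.pi * α * (1 - ρ)) / Real.pi * (1 + y) ^ (-(α * ρ)) *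
        (1 - y) ^ (-(α * (1 - ρ))) *
        ((x + 1) ^ (α * ρ) * (x - 1) ^ (α * (1 - ρ)) * (x - y)⁻¹ -
          (α - 1) *
            ∫ t in (1:ℝ)..x, (t - 1) ^ (α * (1 - ρ) - 1) * (t + 1) ^ (α * ρ - 1)) = 1 := by
  have hα0 : 0 < α := by linarith [hα.1]
  have hmul : α * (1 / α) = 1 := by field_simp
  have ha : α * ρ < 1 := by
    have := mul_lt_mul_of_pos_left hρ.2 hα0
    linarith
  have hb : α * (1 - ρ) < 1 := by
    have := mul_lt_mul_of_pos_left hρ.1 hα0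
    linarith
  have hab : α * ρ + α * (1 - ρ) = α := by ring
  have hb0 : 0 < α * (1 - ρ) := by linarith [hα.1]
  have hsin : Real.sin (Real.pi * α * (1 - ρ)) = Real.sin (Real.pi * (α * (1 - ρ))) := by
    rw [mul_assoc]
  have hα1 : α - 1 = α * ρ + α * (1 - ρ) - 1 := by linarith
  rw [hsin, hα1]
  have hab1 : 1 < α * ρ + α * (1 - ρ) := by linarith [hα.1]
  generalize α * ρ = a at *
  generalize α * (1 - ρ) = b at *
  have hmain := integral_Ioo_hitting_density ha hb0 hb hab1 hx
  set K := ∫ t in (1 : ℝ)..x, (t - 1) ^ (b - 1) * (t + 1) ^ (a - 1)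
  have hsub := intervalIntegral.integral_comp_mul_sub (a := 0) (b := 1) (c := 2)
    (fun y : ℝ => Real.sin (Real.pi * b) / Real.pi * (1 + y) ^ (-a) * (1 - y) ^ (-b) *
      ((x + 1) ^ a * (x - 1) ^ b * (x - y)⁻¹ - (a + b - 1) * K)) two_ne_zero 1
  norm_num at hsub
  have hscale : ∫ u in (0 : ℝ)..1, Real.sin (Real.pi * b) / Real.pi * (2 * u) ^ (-a) *
      (1 - (2 * u - 1)) ^ (-b) *
      ((x + 1) ^ a * (x - 1) ^ b * (x - (2 * u - 1))⁻¹ - (a + b - 1) * K) = 1 / 2 := by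
    have hπ : 0 < Real.pi := Real.pi_pos
    have hs : 0 < Real.sin (Real.pi * b) :=
      Real.sin_pos_of_pos_of_lt_pi (by positivity) (by nlinarith)
    have hE : EqOn (fun u : ℝ => Real.sin (Real.pi * b) / Real.pi * (2 * u) ^ (-a) *
        (1 - (2 * u - 1)) ^ (-b) *
        ((x + 1) ^ a * (x - 1) ^ b * (x - (2 * u - 1))⁻¹ - (a + b - 1) * K))
        (fun u : ℝ => Real.sin (Real.pi * b) / Real.pi * 2 ^ (-(a + b)) *
          (u ^ (-a) * (1 - u) ^ (-b) *
            ((x + 1) ^ a * (x - 1) ^ b * (x + 1 - 2 * u)⁻¹ - (a + b - 1) * K))) (Ioo 0 1) := by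
      intro u hu
      have h1 : 0 ≤ 1 - u := by linarith [hu.2]
      have h2 : 1 - (2 * u - 1) = 2 * (1 - u) := by ring
      have h3 : x - (2 * u - 1) = x + 1 - 2 * u := by ring
      simp only
      rw [h2, h3, Real.mul_rpow two_pos.le hu.1.le, Real.mul_rpow two_pos.le h1, neg_add a b,
        Real.rpow_add two_pos]
      ring
    have h4 : (2 : ℝ) ^ (-(a + b)) * 2 ^ (a + b - 1) = 1 / 2 := by
      rw [← Real.rpow_add two_pos, show -(a + b) + (a + b - 1) = -1 by ring, Real.rpow_neg_one]
      norm_num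
    rw [intervalIntegral.integral_of_le zero_le_one, integral_Ioc_eq_integral_Ioo,
      setIntegral_congr_fun measurableSet_Ioo hE, integral_const_mul, hmain, ← h4]
    field_simp
  rw [hscale] at hsub
  linarith
end

section
/- Let α ∈ (1,2), ρ ∈ (1−1/α, 1/α), ρ̂ = 1−ρ. For every λ ≥ 0, ∫_0^∞ e^{−(α−1+λ)x} · [ Γ(2−α)/Γ(1−αρ̂) + ((1−αρ)/Γ(αρ)) ∫_x^∞ e^{αρ̂ z} (e^{z}−1)^{αρ−2} dz ] dx = Γ(1+λ) / ((α−1+λ)·Γ(αρ+λ)). -/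
open MeasureTheory

open Set Filter Topology

lemma integrableOn_and_integral_beta {u v : ℝ} (hu : 0 < u) (hv : 0 < v) :
    IntegrableOn (fun t : ℝ => t ^ (u - 1) * (1 - t) ^ (v - 1)) (Ioo 0 1) ∧
      ∫ t in Ioo (0:ℝ) 1, t ^ (u - 1) * (1 - t) ^ (v - 1) =
        Real.Gamma u * Real.Gamma v / Real.Gamma (u + v) := by
  have hconv : IntegrableOn (fun t : ℝ => (t : ℂ) ^ ((u : ℂ) - 1) * (1 - (t : ℂ)) ^ ((v : ℂ) - 1))
      (Ioc 0 1) := by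
    have h := Complex.betaIntegral_convergent (u := u) (v := v) (by simpa) (by simpa)
    rwa [intervalIntegrable_iff_integrableOn_Ioc_of_le zero_le_one] at h
  have hre : EqOn
      (fun t : ℝ => RCLike.re ((t : ℂ) ^ ((u : ℂ) - 1) * (1 - (t : ℂ)) ^ ((v : ℂ) - 1)))
      (fun t : ℝ => t ^ (u - 1) * (1 - t) ^ (v - 1)) (Ioc 0 1) := by
    intro t ht
    dsimp only
    norm_cast
    rw [← Complex.ofReal_cpow ht.1.le, ← Complex.ofReal_cpow (by linarith [ht.2]),
      RCLike.re_to_complex, Complex.re_mul_ofReal, Complex.ofReal_re]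
  refine ⟨(IntegrableOn.congr_fun hconv.re hre measurableSet_Ioc).mono_set
    Ioo_subset_Ioc_self, ?_⟩
  rw [← integral_Ioc_eq_integral_Ioo, ← setIntegral_congr_fun measurableSet_Ioc hre,
    integral_re hconv, ← intervalIntegral.integral_of_le zero_le_one]
  exact (ProbabilityTheory.beta_eq_betaIntegralReal u v hu hv).symm

lemma image_exp_neg_Ioi : (fun z : ℝ => Real.exp (-z)) '' Ioi 0 = Ioo 0 1 := by
  ext t
  constructor
  · rintro ⟨z, hz, rfl⟩
    exact ⟨Real.exp_pos _, Real.exp_lt_one_iff.2 (neg_lt_zero.2 hz)⟩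
  · rintro ⟨h0, h1⟩
    exact ⟨-Real.log t, neg_pos.2 (Real.log_neg h0 h1), by simp [Real.exp_log h0]⟩

/-- The beta integrand in the variable `t = exp (-z)`. -/
noncomputable def betaKernel (p a z : ℝ) : ℝ := Real.exp (-p * z) * (1 - Real.exp (-z)) ^ (a - 1)

lemma betaKernel_integrableOn_and_integral {p a : ℝ} (hp : 0 < p) (ha : 0 < a) :
    IntegrableOn (betaKernel p a) (Ioi 0) ∧
      ∫ z in Ioi 0, betaKernel p a z = Real.Gamma p * Real.Gamma a / Real.Gamma (p + a) := by
  have hderiv : ∀ z ∈ Ioi (0:ℝ),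
      HasDerivWithinAt (fun z : ℝ => Real.exp (-z)) (-Real.exp (-z)) (Ioi 0) z := fun z _ => by
    simpa using ((hasDerivAt_neg z).exp).hasDerivWithinAt
  have hinj : InjOn (fun z : ℝ => Real.exp (-z)) (Ioi 0) :=
    fun x _ y _ h => neg_injective (Real.exp_injective h)
  have heq : (fun z : ℝ => |-Real.exp (-z)| •
      (Real.exp (-z) ^ (p - 1) * (1 - Real.exp (-z)) ^ (a - 1))) = betaKernel p a := by
    ext z
    rw [abs_neg, abs_of_pos (Real.exp_pos _), smul_eq_mul, ← mul_assoc, ← Real.exp_mul,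
      ← Real.exp_add, betaKernel]
    ring_nf
  have h := integrableOn_and_integral_beta hp ha
  rw [← image_exp_neg_Ioi] at h
  rw [integrableOn_image_iff_integrableOn_abs_deriv_smul measurableSet_Ioi hderiv hinj,
    integral_image_eq_integral_abs_deriv_smul measurableSet_Ioi hderiv hinj] at h
  rwa [heq] at h

lemma one_sub_exp_neg_pos {z : ℝ} (hz : 0 < z) : 0 < 1 - Real.exp (-z) :=
  sub_pos.2 (Real.exp_lt_one_iff.2 (neg_lt_zero.2 hz))

lemma hasDerivAt_betaKernel (p a : ℝ) {z : ℝ} (hz : 0 < z) :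
    HasDerivAt (betaKernel p a)
      ((a - 1) * betaKernel p (a - 1) z - (p + a - 1) * betaKernel p a z) z := by
  have hpos := one_sub_exp_neg_pos hz
  have h1 : HasDerivAt (fun z : ℝ => Real.exp (-p * z)) (Real.exp (-p * z) * (-p)) z := by
    simpa using ((hasDerivAt_id z).const_mul (-p)).exp
  have h2 : HasDerivAt (fun z : ℝ => 1 - Real.exp (-z)) (Real.exp (-z)) z := by
    simpa using ((hasDerivAt_neg z).exp).const_sub 1
  refine (h1.mul (h2.rpow_const (p := a - 1) (Or.inl hpos.ne'))).congr_deriv ?_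
  have h3 : (1 - Real.exp (-z)) ^ (a - 1) =
      (1 - Real.exp (-z)) ^ (a - 1 - 1) * (1 - Real.exp (-z)) := by
    rw [← Real.rpow_add_one hpos.ne']; ring_nf
  simp only [betaKernel]
  rw [h3]
  ring

lemma continuousOn_betaKernel (p a : ℝ) : ContinuousOn (betaKernel p a) (Ioi 0) :=
  fun _ hz => (hasDerivAt_betaKernel p a hz).continuousAt.continuousWithinAt

lemma tendsto_betaKernel_atTop {p : ℝ} (hp : 0 < p) (a : ℝ) :
    Tendsto (betaKernel p a) atTop (𝓝 0) := by
  have h1 : Tendsto (fun z : ℝ => Real.exp (-p * z)) atTop (𝓝 0) :=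
    Real.tendsto_exp_atBot.comp (tendsto_id.const_mul_atTop_of_neg (neg_lt_zero.2 hp))
  have h2 : Tendsto (fun z : ℝ => (1 - Real.exp (-z)) ^ (a - 1)) atTop (𝓝 ((1 - 0) ^ (a - 1))) :=
    (Real.tendsto_exp_neg_atTop_nhds_zero.const_sub 1).rpow_const (Or.inl (by norm_num))
  have h := h1.mul h2
  rw [zero_mul] at h
  exact h

lemma integrableOn_betaKernel_sub_one {p a x : ℝ} (hp : 0 < p) (ha : 0 < a) (hx : 0 < x) :
    IntegrableOn (betaKernel p (a - 1)) (Ioi x) := by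
  have hint := (betaKernel_integrableOn_and_integral hp ha).1.mono_set (Ioi_subset_Ioi hx.le)
  have hx' := one_sub_exp_neg_pos hx
  refine (Integrable.const_mul hint (1 - Real.exp (-x))⁻¹).mono'
    (((continuousOn_betaKernel p (a - 1)).mono
      (Ioi_subset_Ioi hx.le)).aestronglyMeasurable measurableSet_Ioi) ?_
  refine ae_restrict_of_forall_mem measurableSet_Ioi fun z (hz : x < z) => ?_
  have hz' := one_sub_exp_neg_pos (hx.trans hz)
  have hk : 0 ≤ betaKernel p a z := mul_nonneg (Real.exp_pos _).le (Real.rpow_nonneg hz'.le _)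
  have heq : betaKernel p (a - 1) z = (1 - Real.exp (-z))⁻¹ * betaKernel p a z := by
    rw [betaKernel, betaKernel, Real.rpow_sub_one hz'.ne']
    ring
  rw [heq, Real.norm_of_nonneg (mul_nonneg (inv_nonneg.2 hz'.le) hk)]
  gcongr

lemma one_sub_mul_integral_betaKernel_sub_one {p a x : ℝ} (hp : 0 < p) (ha : 0 < a) (hx : 0 < x) :
    (1 - a) * ∫ z in Ioi x, betaKernel p (a - 1) z =
      betaKernel p a x - (p + a - 1) * ∫ z in Ioi x, betaKernel p a z := by
  have h1 := (integrableOn_betaKernel_sub_one hp ha hx).const_mul (a - 1)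
  have h2 := Integrable.const_mul
    ((betaKernel_integrableOn_and_integral hp ha).1.mono_set (Ioi_subset_Ioi hx.le)) (p + a - 1)
  have h := integral_Ioi_of_hasDerivAt_of_tendsto'
    (fun z (hz : x ≤ z) => hasDerivAt_betaKernel p a (hx.trans_le hz)) (h1.sub h2)
    (tendsto_betaKernel_atTop hp a)
  rw [integral_sub h1 h2, integral_const_mul, integral_const_mul] at h
  linarith

lemma laplace_primitive {k : ℝ → ℝ} (hk : IntegrableOn k (Ioi 0)) (hc : ContinuousOn k (Ioi 0))
    {s : ℝ} (hs : 0 < s) :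
    IntegrableOn (fun x => Real.exp (-s * x) * ∫ z in (0:ℝ)..x, k z) (Ioi 0) ∧
      ∫ x in Ioi 0, Real.exp (-s * x) * ∫ z in (0:ℝ)..x, k z =
        s⁻¹ * ∫ x in Ioi 0, Real.exp (-s * x) * k x := by
  have hii : ∀ b, 0 ≤ b → IntervalIntegrable k volume 0 b := fun b hb =>
    (intervalIntegrable_iff_integrableOn_Ioc_of_le hb).2 (hk.mono_set Ioc_subset_Ioi_self)
  have hcont : ContinuousWithinAt (fun x => ∫ z in (0:ℝ)..x, k z) (Ici 0) 0 := by
    have h := intervalIntegral.continuousOn_primitive_interval' (hii 1 zero_le_one)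
      (left_mem_uIcc) 0 left_mem_uIcc
    rw [uIcc_of_le zero_le_one] at h
    exact h.mono_of_mem_nhdsWithin (Icc_mem_nhdsGE zero_lt_one)
  have hder : ∀ x ∈ Ioi (0:ℝ), HasDerivAt (fun x => ∫ z in (0:ℝ)..x, k z) (k x) x := fun x hx =>
    intervalIntegral.integral_hasDerivAt_right (hii x (le_of_lt hx))
      (hc.stronglyMeasurableAtFilter isOpen_Ioi x hx) (hc.continuousAt (Ioi_mem_nhds hx))
  have hexp : IntegrableOn (fun x : ℝ => Real.exp (-s * x)) (Ioi 0) :=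
    integrableOn_exp_mul_Ioi (neg_lt_zero.2 hs) 0
  have hI1 : IntegrableOn (fun x => Real.exp (-s * x) * ∫ z in (0:ℝ)..x, k z) (Ioi 0) := by
    refine Integrable.mul_bdd (c := ∫ z in Ioi 0, ‖k z‖) hexp
      (ContinuousOn.aestronglyMeasurable
        (fun x hx => (hder x hx).continuousAt.continuousWithinAt) measurableSet_Ioi) ?_
    refine ae_restrict_of_forall_mem measurableSet_Ioi fun x (hx : 0 < x) => ?_
    rw [intervalIntegral.integral_of_le hx.le]
    exact (norm_integral_le_integral_norm _).trans
      (setIntegral_mono_set hk.norm (ae_of_all _ fun _ => norm_nonneg _)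
        (Ioc_subset_Ioi_self.eventuallyLE))
  have hI2 : IntegrableOn (fun x => Real.exp (-s * x) * k x) (Ioi 0) := by
    refine Integrable.bdd_mul (c := 1) hk (by fun_prop) ?_
    refine ae_restrict_of_forall_mem measurableSet_Ioi fun x (hx : 0 < x) => ?_
    rw [Real.norm_of_nonneg (Real.exp_pos _).le, Real.exp_le_one_iff]
    nlinarith
  refine ⟨hI1, ?_⟩
  have hd1 : ∀ x : ℝ, HasDerivAt (fun x : ℝ => Real.exp (-s * x)) (Real.exp (-s * x) * (-s)) x :=
    fun x => by simpa using ((hasDerivAt_id x).const_mul (-s)).exp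
  have htend : Tendsto (fun x => Real.exp (-s * x) * ∫ z in (0:ℝ)..x, k z) atTop (𝓝 0) := by
    have h1 : Tendsto (fun z : ℝ => Real.exp (-s * z)) atTop (𝓝 0) :=
      Real.tendsto_exp_atBot.comp (tendsto_id.const_mul_atTop_of_neg (neg_lt_zero.2 hs))
    simpa using h1.mul (intervalIntegral_tendsto_integral_Ioi 0 hk tendsto_id)
  have h := integral_Ioi_of_hasDerivAt_of_tendsto
    (f := fun x => Real.exp (-s * x) * ∫ z in (0:ℝ)..x, k z)
    (f' := fun x => -s * (Real.exp (-s * x) * ∫ z in (0:ℝ)..x, k z) + Real.exp (-s * x) * k x)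
    ((hd1 0).continuousAt.continuousWithinAt.mul hcont)
    (fun x hx => ((hd1 x).mul (hder x hx)).congr_deriv (by ring))
    ((hI1.const_mul (-s)).add hI2) htend
  rw [integral_add (hI1.const_mul (-s)) hI2, integral_const_mul] at h
  simp only [intervalIntegral.integral_same, mul_zero, sub_zero] at h
  rw [eq_inv_mul_iff_mul_eq₀ hs.ne']
  linarith

lemma exp_mul_betaKernel (s p a x : ℝ) :
    Real.exp (-s * x) * betaKernel p a x = betaKernel (p + s) a x := by
  rw [betaKernel, betaKernel, ← mul_assoc, ← Real.exp_add]
  ring_nf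

lemma exp_mul_exp_sub_one_rpow {b c z : ℝ} (hz : 0 < z) :
    Real.exp (b * z) * (Real.exp z - 1) ^ (c - 1) = betaKernel (1 - b - c) c z := by
  have h : Real.exp z - 1 = Real.exp z * (1 - Real.exp (-z)) := by
    rw [mul_sub, ← Real.exp_add]; simp
  rw [h, Real.mul_rpow (Real.exp_pos _).le (one_sub_exp_neg_pos hz).le, ← Real.exp_mul,
    ← mul_assoc, ← Real.exp_add, betaKernel]
  ring_nf

lemma renewal_density_eq {a p x : ℝ} (hp : 0 < p) (ha : 0 < a) (hpa : 0 < p + a - 1) (hx : 0 < x) :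
    Real.Gamma p / Real.Gamma (p + a - 1) + (1 - a) / Real.Gamma a *
        ∫ z in Ioi x, betaKernel p (a - 1) z =
      (Real.Gamma a)⁻¹ * (betaKernel p a x + (p + a - 1) * ∫ z in (0:ℝ)..x, betaKernel p a z) := by
  obtain ⟨hint, hval⟩ := betaKernel_integrableOn_and_integral hp ha
  rw [← intervalIntegral.integral_Ioi_sub_Ioi hint hx.le, hval, div_mul_eq_mul_div,
    one_sub_mul_integral_betaKernel_sub_one hp ha hx]
  have hΓ : Real.Gamma (p + a) = (p + a - 1) * Real.Gamma (p + a - 1) := by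
    rw [← Real.Gamma_add_one hpa.ne']; ring_nf
  have h1 := (Real.Gamma_pos_of_pos hpa).ne'
  have h2 := (Real.Gamma_pos_of_pos ha).ne'
  rw [hΓ]
  field_simp
  ring

theorem ascending_renewal_laplace_transform_big_alpha
    (α ρ : ℝ) (hα : α ∈ Set.Ioo (1:ℝ) 2) (hρ : ρ ∈ Set.Ioo (1 - 1/α) (1/α))
    (lam : ℝ) (hlam : 0 ≤ lam) :
    ∫ x in Set.Ioi (0:ℝ),
        Real.exp (-(α - 1 + lam) * x) *
          (Real.Gamma (2 - α) / Real.Gamma (1 - α * (1 - ρ)) +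
            (1 - α * ρ) / Real.Gamma (α * ρ) *
              ∫ z in Set.Ioi x, Real.exp (α * (1 - ρ) * z) * (Real.exp z - 1) ^ (α * ρ - 2)) =
    Real.Gamma (1 + lam) / ((α - 1 + lam) * Real.Gamma (α * ρ + lam)) := by
  obtain ⟨hα1, hα2⟩ := hα
  obtain ⟨hρ1, hρ2⟩ := hρ
  have hα0 : 0 < α := by linarith
  have hb : 0 < 1 - α * (1 - ρ) := by
    have := mul_lt_mul_of_pos_left hρ1 hα0
    rw [mul_sub, mul_one_div_cancel hα0.ne'] at this
    linarith
  have ha : 0 < α * ρ := by linarith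
  have hp : 0 < 2 - α := by linarith
  have hs : 0 < α - 1 + lam := by linarith
  have hpa : 2 - α + α * ρ - 1 = 1 - α * (1 - ρ) := by ring
  have hrw : ∀ x ∈ Ioi (0:ℝ), Real.exp (-(α - 1 + lam) * x) *
          (Real.Gamma (2 - α) / Real.Gamma (1 - α * (1 - ρ)) +
            (1 - α * ρ) / Real.Gamma (α * ρ) *
              ∫ z in Set.Ioi x, Real.exp (α * (1 - ρ) * z) * (Real.exp z - 1) ^ (α * ρ - 2)) =
      (Real.Gamma (α * ρ))⁻¹ * (betaKernel (1 + lam) (α * ρ) x + (1 - α * (1 - ρ)) *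
        (Real.exp (-(α - 1 + lam) * x) * ∫ z in (0:ℝ)..x, betaKernel (2 - α) (α * ρ) z)) := by
    intro x (hx : 0 < x)
    have hinner : ∫ z in Ioi x, Real.exp (α * (1 - ρ) * z) * (Real.exp z - 1) ^ (α * ρ - 2) =
        ∫ z in Ioi x, betaKernel (2 - α) (α * ρ - 1) z := by
      refine setIntegral_congr_fun measurableSet_Ioi fun z (hz : x < z) => ?_
      have h := exp_mul_exp_sub_one_rpow (b := α * (1 - ρ)) (c := α * ρ - 1) (hx.trans hz)
      rw [show α * ρ - 1 - 1 = α * ρ - 2 by ring,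
        show 1 - α * (1 - ρ) - (α * ρ - 1) = 2 - α by ring] at h
      exact h
    have h := renewal_density_eq hp ha (hpa ▸ hb) hx
    rw [hpa] at h
    rw [hinner, h, show 1 + lam = 2 - α + (α - 1 + lam) by ring, ← exp_mul_betaKernel]
    ring
  obtain ⟨hI, hL⟩ := laplace_primitive (betaKernel_integrableOn_and_integral hp ha).1
    (continuousOn_betaKernel _ _) hs
  obtain ⟨hJ, hB⟩ := betaKernel_integrableOn_and_integral (p := 1 + lam) (by linarith) ha
  rw [setIntegral_congr_fun measurableSet_Ioi hrw, integral_const_mul,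
    integral_add hJ (hI.const_mul _), integral_const_mul, hL]
  simp_rw [exp_mul_betaKernel]
  rw [show 2 - α + (α - 1 + lam) = 1 + lam by ring, hB,
    show 1 + lam + α * ρ = α * ρ + lam + 1 by ring, Real.Gamma_add_one (by linarith)]
  have h1 := (Real.Gamma_pos_of_pos ha).ne'
  have h2 : 0 < α * ρ + lam := by linarith
  have h3 := (Real.Gamma_pos_of_pos h2).ne'
  field_simp
  ring
end
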